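/- Let a(x), b(x) ∈ F_q[x] and let C be the one-generator quasi-cyclic code of length 2n and index 2 generated by the images of (a(x), b(x)) in R. If C is symplectic dual-containing, i.e., C^{⊥s} ⊆ C, then gcd(a(x), b(x), x^n - 1) has degree 0; equivalently, dim_{F_q}(C) = n and hence C = C^{⊥s}. -/

import Mathlib

open Polynomial Matrix

noncomputable section
open scoped Classical

variable {F : Type*} [Field F] {n : ℕ}

/-- The symplectic inner product on `F^{2n}`. -/
def sympForm (u v : (Fin n ⊕ Fin n) → F) : F :=
  (∑ i : Fin n, u (Sum.inl i) * v (Sum.inr i)) -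
    ∑ i : Fin n, v (Sum.inl i) * u (Sum.inr i)

lemma sympForm_add_left (u w v : (Fin n ⊕ Fin n) → F) :
    sympForm (u + w) v = sympForm u v + sympForm w v := by
  simp [sympForm, add_mul, mul_add, Finset.sum_add_distrib]
  ring

lemma sympForm_smul_left (c : F) (u v : (Fin n ⊕ Fin n) → F) :
    sympForm (c • u) v = c * sympForm u v := by
  simp [sympForm, Finset.mul_sum, mul_sub, mul_assoc, mul_left_comm]

/-- The symplectic dual of a subspace of `F^{2n}`. -/
def sympDual (C : Submodule F ((Fin n ⊕ Fin n) → F)) :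
    Submodule F ((Fin n ⊕ Fin n) → F) where
  carrier := {u | ∀ v ∈ C, sympForm u v = 0}
  add_mem' := by
    intro a b ha hb v hv
    rw [sympForm_add_left, ha v hv, hb v hv, add_zero]
  zero_mem' := by
    intro v hv
    have : (0 : (Fin n ⊕ Fin n) → F) = (0 : F) • 0 := by simp
    rw [this, sympForm_smul_left, zero_mul]
  smul_mem' := by
    intro c a ha v hv
    rw [sympForm_smul_left, ha v hv, mul_zero]

/-- The `2n × 2n` symplectic matrix `Ω`. -/
def Omat (F : Type*) [Field F] (n : ℕ) : Matrix (Fin n ⊕ Fin n) (Fin n ⊕ Fin n) F :=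
  Matrix.fromBlocks 0 1 (-1) 0

/-- The row space of a matrix. -/
def rowSpace {ι κ : Type*} (M : Matrix ι κ F) : Submodule F (κ → F) :=
  Submodule.span F (Set.range fun i => M i)

lemma monic_xn_sub_one (F : Type*) [Field F] {n : ℕ} (hn : n ≠ 0) :
    (X ^ n - 1 : F[X]).Monic := by
  simpa using Polynomial.monic_X_pow_sub_C (1 : F) hn

/-- The coefficient vector of the canonical degree `< n` representative of an
element of `R = F[x]/(x^n - 1)`, as an `F`-linear map. -/
def toVecL (hn : n ≠ 0) : AdjoinRoot (X ^ n - 1 : F[X]) →ₗ[F] (Fin n → F) :=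
  (LinearMap.pi fun i : Fin n => Polynomial.lcoeff F (i : ℕ)) ∘ₗ
    AdjoinRoot.modByMonicHom (monic_xn_sub_one F hn)

/-- The linear map `r ↦ (r·a, r·b)` from `R` to `F^{2n}`. -/
def QCgen (hn : n ≠ 0) (a b : AdjoinRoot (X ^ n - 1 : F[X])) :
    AdjoinRoot (X ^ n - 1 : F[X]) →ₗ[F] ((Fin n ⊕ Fin n) → F) :=
  LinearMap.pi (Sum.elim
    (fun i => LinearMap.proj i ∘ₗ toVecL hn ∘ₗ LinearMap.mulRight F a)
    (fun i => LinearMap.proj i ∘ₗ toVecL hn ∘ₗ LinearMap.mulRight F b))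

/-- The one-generator quasi-cyclic code of length `2n` and index `2`
generated by `(a(x), b(x))`, as a subspace of `F^{2n}`. -/
def QCcode (hn : n ≠ 0) (a b : AdjoinRoot (X ^ n - 1 : F[X])) :
    Submodule F ((Fin n ⊕ Fin n) → F) :=
  LinearMap.range (QCgen hn a b)

/-- The element of `R` with coefficient vector `v`. -/
def fromVec (v : Fin n → F) : AdjoinRoot (X ^ n - 1 : F[X]) :=
  AdjoinRoot.mk _ (∑ i : Fin n, Polynomial.C (v i) * X ^ (i : ℕ))

/-- The transpose polynomial `ā(x) = x^n a(x⁻¹) mod (x^n - 1)`. -/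
def transposePoly (hn : n ≠ 0) (a : AdjoinRoot (X ^ n - 1 : F[X])) :
    AdjoinRoot (X ^ n - 1 : F[X]) :=
  fromVec (fun i => toVecL hn a (-i))

/-- The cyclic code of length `n` generated by (the image of) `g(x)`. -/
def cyclicCode (hn : n ≠ 0) (g : F[X]) : Submodule F (Fin n → F) :=
  LinearMap.range (toVecL hn ∘ₗ
    LinearMap.mulRight F (AdjoinRoot.mk (X ^ n - 1 : F[X]) g))

/-- The Hamming weight of a vector. -/
def hWeight {ι : Type*} (u : ι → F) : ℕ := {i | u i ≠ 0}.ncard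


/-!
Composing `r ↦ (r·a, r·b)` with `F[x] → R` gives a linear map from `F[x]` onto `C` whose kernel is
generated by `(xⁿ - 1) / g`, where `g = gcd(a, b, xⁿ - 1)`, so `dim C = n - deg g`. The symplectic
form is nondegenerate, so `dim C + dim C^{⊥s} = 2n`. If `C^{⊥s} ⊆ C`, then `dim C ≥ n`, which leaves
only `deg g = 0` and `dim C = n = dim C^{⊥s}`.
-/

-- `Matrix.J` is `-Omat`, hence the swapped arguments.
lemma sympForm_eq_toBilin'_J (u v : (Fin n ⊕ Fin n) → F) :
    sympForm u v = Matrix.toBilin' (Matrix.J (Fin n) F) v u := by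
  have hJ : Matrix.J (Fin n) F *ᵥ u = Sum.elim (-(u ∘ Sum.inr)) (u ∘ Sum.inl) := by
    simp only [Matrix.J, Matrix.fromBlocks_mulVec, Matrix.zero_mulVec, Matrix.neg_mulVec,
      Matrix.one_mulVec, zero_add, add_zero]
  rw [Matrix.toBilin'_apply', hJ, Matrix.dotProduct_block, Sum.elim_comp_inl, Sum.elim_comp_inr,
    dotProduct_neg, neg_add_eq_sub, dotProduct_comm (v ∘ Sum.inr)]
  rfl

lemma sympDual_eq_orthogonal (C : Submodule F ((Fin n ⊕ Fin n) → F)) :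
    sympDual C = (Matrix.toBilin' (Matrix.J (Fin n) F)).orthogonal C := by
  ext u
  exact forall₂_congr fun v _ => by rw [sympForm_eq_toBilin'_J]

lemma finrank_add_finrank_sympDual (C : Submodule F ((Fin n ⊕ Fin n) → F)) :
    Module.finrank F C + Module.finrank F (sympDual C) = 2 * n := by
  have hJ : (Matrix.toBilin' (Matrix.J (Fin n) F)).Nondegenerate :=
    (Matrix.nondegenerate_of_det_ne_zero (Matrix.isUnit_det_J (Fin n) F).ne_zero).toBilin'
  have hV : Module.finrank F ((Fin n ⊕ Fin n) → F) = 2 * n := by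
    rw [Module.finrank_fintype_fun_eq_card, Fintype.card_sum, Fintype.card_fin, two_mul]
  rw [sympDual_eq_orthogonal, LinearMap.BilinForm.finrank_orthogonal hJ, ← hV]
  exact Nat.add_sub_cancel' C.finrank_le

lemma dvd_mul_euclidean_gcd_iff {R : Type*} [EuclideanDomain R] [DecidableEq R] {m p a b : R} :
    m ∣ p * EuclideanDomain.gcd a b ↔ m ∣ p * a ∧ m ∣ p * b := by
  refine ⟨fun h => ⟨h.trans (mul_dvd_mul_left p (EuclideanDomain.gcd_dvd_left a b)),
    h.trans (mul_dvd_mul_left p (EuclideanDomain.gcd_dvd_right a b))⟩, fun ⟨ha, hb⟩ => ?_⟩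
  rw [EuclideanDomain.gcd_eq_gcd_ab, mul_add, ← mul_assoc, ← mul_assoc]
  exact dvd_add (ha.mul_right _) (hb.mul_right _)

lemma finrank_range_eq_natDegree {V : Type*} [AddCommGroup V] [Module F V]
    (φ : F[X] →ₗ[F] V) {h : F[X]} (hφ : ∀ p, φ p = 0 ↔ h ∣ p) :
    Module.finrank F (LinearMap.range φ) = h.natDegree := by
  have hker : LinearMap.ker φ = (Ideal.span {h}).restrictScalars F := by
    ext p
    rw [LinearMap.mem_ker, hφ, Submodule.restrictScalars_mem, Ideal.mem_span_singleton]
  rw [← φ.quotKerEquivRange.finrank_eq, hker, ← finrank_quotient_span_eq_natDegree]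
  exact (Submodule.Quotient.restrictScalarsEquiv F (Ideal.span {h})).finrank_eq

lemma natDegree_X_pow_sub_one {R : Type*} [Ring R] [Nontrivial R] :
    (X ^ n - 1 : R[X]).natDegree = n := by
  rw [← Polynomial.C_1, Polynomial.natDegree_X_pow_sub_C]

lemma toVecL_injective (hn : n ≠ 0) : Function.Injective (toVecL (F := F) hn) := by
  refine (injective_iff_map_eq_zero _).mpr fun r hr => ?_
  have hm := monic_xn_sub_one F hn
  obtain ⟨p, rfl⟩ := AdjoinRoot.mk_surjective r
  rw [AdjoinRoot.mk_eq_zero, ← Polynomial.modByMonic_eq_zero_iff_dvd hm]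
  have hdeg : (p %ₘ (X ^ n - 1)).degree < n :=
    (Polynomial.degree_modByMonic_lt p hm).trans_eq
      (by rw [Polynomial.degree_eq_natDegree hm.ne_zero, natDegree_X_pow_sub_one])
  ext i
  rcases lt_or_ge i n with hi | hi
  · exact congr_fun hr ⟨i, hi⟩
  · exact Polynomial.coeff_eq_zero_of_degree_lt (hdeg.trans_le (by exact_mod_cast hi))

lemma QCgen_eq_zero_iff (hn : n ≠ 0) {a b r : AdjoinRoot (X ^ n - 1 : F[X])} :
    QCgen hn a b r = 0 ↔ r * a = 0 ∧ r * b = 0 := by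
  have hsplit : QCgen hn a b r = Sum.elim (toVecL hn (r * a)) (toVecL hn (r * b)) := by
    ext (i | i) <;> rfl
  rw [hsplit, ← Sum.elim_zero_zero, Sum.elim_eq_iff,
    map_eq_zero_iff _ (toVecL_injective hn), map_eq_zero_iff _ (toVecL_injective hn)]

lemma QCgen_mk_eq_zero_iff (hn : n ≠ 0) {a b p : F[X]} :
    QCgen hn (AdjoinRoot.mk (X ^ n - 1) a) (AdjoinRoot.mk (X ^ n - 1) b)
        (AdjoinRoot.mk (X ^ n - 1) p) = 0 ↔
      X ^ n - 1 ∣ p * EuclideanDomain.gcd a (EuclideanDomain.gcd b (X ^ n - 1)) := by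
  simp only [QCgen_eq_zero_iff, ← map_mul, AdjoinRoot.mk_eq_zero, dvd_mul_euclidean_gcd_iff,
    dvd_mul_left, and_true]

lemma finrank_QCcode_add_natDegree_gcd (hn : n ≠ 0) (a b : F[X]) :
    Module.finrank F (QCcode hn (AdjoinRoot.mk (X ^ n - 1) a) (AdjoinRoot.mk (X ^ n - 1) b)) +
      (EuclideanDomain.gcd a (EuclideanDomain.gcd b (X ^ n - 1))).natDegree = n := by
  set g := EuclideanDomain.gcd a (EuclideanDomain.gcd b (X ^ n - 1))
  obtain ⟨h, hgh⟩ : g ∣ X ^ n - 1 :=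
    (EuclideanDomain.gcd_dvd_right a _).trans (EuclideanDomain.gcd_dvd_right b _)
  have hgh_ne : g * h ≠ 0 := hgh ▸ (monic_xn_sub_one F hn).ne_zero
  have hg_ne := left_ne_zero_of_mul hgh_ne
  let φ : F[X] →ₗ[F] ((Fin n ⊕ Fin n) → F) :=
    QCgen hn (AdjoinRoot.mk (X ^ n - 1) a) (AdjoinRoot.mk (X ^ n - 1) b) ∘ₗ
      (AdjoinRoot.mkₐ (X ^ n - 1)).toLinearMap
  have hrange : LinearMap.range φ =
      QCcode hn (AdjoinRoot.mk (X ^ n - 1) a) (AdjoinRoot.mk (X ^ n - 1) b) :=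
    LinearMap.range_comp_of_range_eq_top _ (LinearMap.range_eq_top.mpr AdjoinRoot.mk_surjective)
  have hker (p : F[X]) : φ p = 0 ↔ h ∣ p := by
    rw [← mul_dvd_mul_iff_left hg_ne, ← hgh, mul_comm g p]
    exact QCgen_mk_eq_zero_iff hn
  calc
    _ = h.natDegree + g.natDegree := by rw [← hrange, finrank_range_eq_natDegree φ hker]
    _ = (X ^ n - 1 : F[X]).natDegree := by
      rw [hgh, Polynomial.natDegree_mul hg_ne (right_ne_zero_of_mul hgh_ne), add_comm]
    _ = n := natDegree_X_pow_sub_one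

theorem oneGenQC_dualContaining_general
    {F : Type*} [Field F] {n : ℕ} (hn : n ≠ 0)
    (a b : F[X])
    (C : Submodule F ((Fin n ⊕ Fin n) → F))
    (hC : C = QCcode hn (AdjoinRoot.mk (X ^ n - 1 : F[X]) a)
      (AdjoinRoot.mk (X ^ n - 1 : F[X]) b))
    (hdc : sympDual C ≤ C) :
    (EuclideanDomain.gcd a (EuclideanDomain.gcd b (X ^ n - 1))).natDegree = 0 ∧
      Module.finrank F C = n ∧ C = sympDual C := by
  have hdual := finrank_add_finrank_sympDual C
  have hle := Submodule.finrank_mono hdc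
  have hdim := finrank_QCcode_add_natDegree_gcd hn a b
  rw [← hC] at hdim
  exact ⟨by omega, by omega, (Submodule.eq_of_le_of_finrank_le hdc (by omega)).symm⟩

/-- If the one-generator QC code `C` generated by the images
of `(a(x), b(x))` is symplectic dual-containing, then
`gcd(a(x), b(x), xⁿ - 1)` has degree `0`; equivalently `dim C = n` and hence
`C = C^{⊥s}`. -/
theorem oneGenQC_dualContaining
    {F : Type*} [Field F] [Fintype F] {n : ℕ} (hn : n ≠ 0)
    (a b : F[X])
    (C : Submodule F ((Fin n ⊕ Fin n) → F))
    (hC : C = QCcode hn (AdjoinRoot.mk (X ^ n - 1 : F[X]) a)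
      (AdjoinRoot.mk (X ^ n - 1 : F[X]) b))
    (hdc : sympDual C ≤ C) :
    (EuclideanDomain.gcd a (EuclideanDomain.gcd b (X ^ n - 1))).natDegree = 0 ∧
      Module.finrank F C = n ∧ C = sympDual C :=
  oneGenQC_dualContaining_general hn a b C hC hdc

end
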